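/- Let γ be a modular bridge from Ω_A to Ω_B. Let ω ∈ dom(D_M) and l ≥ D_M(ω). If η ∈ t_γ(ω|l) and b ∈ t_γ(⟨ω,ω⟩_M | H(l,l)), then ‖b − ⟨η,η⟩_N‖_B ≤ (8l√2 + H(2l,2l) + 2H(l,l) + 2√2·H(2l,1)) · λ(γ). -/

import Mathlib

/-!
### Idea of the proof

The element `c = b - ⟨η,η⟩` is self-adjoint, so its norm is attained by a state `ψ` of `B`
(`exists_state_norm_eq`). By the definition of the height, `ψ` is, up to an arbitrarily
small error, within the length `λ` of `φ ∘ π_B` for some state `φ` in the 1-level set of the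
pivot, and moving from `ψ` to `φ ∘ π_B` costs at most `L(c) λ` (`ModularBridge.norm_le_of_level`). Here `L(b) ≤ H(l,l)`, and
`L(⟨η,η⟩) = L(⟨2η,2η⟩)/4 ≤ H(2l,2l)/4` (`L_inn_self_le`).

A level state `φ` satisfies `φ(dx) = φ(d) = φ(xd)` for the pivot `x`, by the degenerate case of
Cauchy–Schwarz, hence `|φ(π_A a) - φ(π_B b)| ≤ bn(a, b)` (`ModularBridge.level_sub_le_bn`). With
`a = ⟨ω,ω⟩` this gives an error `H(l,l) λ`. It remains to compare `φ(π_A⟨ω,ω⟩)` with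
`φ(π_B⟨η,η⟩)` (`ModularBridge.level_inn_sub_le`). Choose anchors `lω_j` near `ω` and co-anchors
`lη_i` near `η`, and let the indices `j` and `i` pass through the bridge in the chain
`⟨ω,ω⟩ ~ ⟨lω_j,ω⟩ ~ ⟨lη_j,η⟩ ~ ⟨lη_j,lη_i⟩ ~ ⟨lω_j,lω_i⟩ ~ ⟨ω,lω_i⟩ ~ ⟨η,lη_i⟩ ~ ⟨η,η⟩`.
Four steps cost `l²` times the imprint, two cost `l²` times the reach, and one costs `l²` times the
modular reach: at most `6l²λ` altogether. Since `8l² ≤ H(2l,2l)`, the sum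
`(2H(l,l) + 6l² + H(2l,2l)/4) λ` is at most `(2H(l,l) + H(2l,2l)) λ`, and the remaining terms of
the stated constant are nonnegative.

All the suprema above are taken in `ℝ`, so they bound their members only when the sets are
bounded. For the Monge–Kantorovich metric this is extracted from the fact that it induces the
weak-* topology; for the modular metric and the deck seminorm it follows from a bound on inner
products obtained by polarization (`norm_inn_le`).
-/


open scoped ComplexOrder

noncomputable section

/-! ### Admissible functions -/

/-- A function `F : [0,∞)⁴ → [0,∞)` is admissible when it is nondecreasing in each argument
and dominates `x₁x₃ + x₂x₄`. -/
def Admissible (F : ℝ → ℝ → ℝ → ℝ → ℝ) : Prop :=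
  (∀ x₁ x₂ x₃ x₄ y₁ y₂ y₃ y₄ : ℝ, 0 ≤ x₁ → 0 ≤ x₂ → 0 ≤ x₃ → 0 ≤ x₄ →
      x₁ ≤ y₁ → x₂ ≤ y₂ → x₃ ≤ y₃ → x₄ ≤ y₄ → F x₁ x₂ x₃ x₄ ≤ F y₁ y₂ y₃ y₄) ∧
  (∀ x₁ x₂ x₃ x₄ : ℝ, 0 ≤ x₁ → 0 ≤ x₂ → 0 ≤ x₃ → 0 ≤ x₄ →
      x₁ * x₃ + x₂ * x₄ ≤ F x₁ x₂ x₃ x₄)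

/-- An admissible triple `(F,G,H)`. -/
def AdmissibleTriple (F : ℝ → ℝ → ℝ → ℝ → ℝ) (G : ℝ → ℝ → ℝ → ℝ) (H : ℝ → ℝ → ℝ) : Prop :=
  Admissible F ∧
  (∀ x y z x' y' z' : ℝ, 0 ≤ x → 0 ≤ y → 0 ≤ z → x ≤ x' → y ≤ y' → z ≤ z' →
      G x y z ≤ G x' y' z') ∧
  (∀ x y z : ℝ, 0 ≤ x → 0 ≤ y → 0 ≤ z → (x + y) * z ≤ G x y z) ∧
  (∀ x y x' y' : ℝ, 0 ≤ x → 0 ≤ y → x ≤ x' → y ≤ y' → H x y ≤ H x' y') ∧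
  (∀ x y : ℝ, 0 ≤ x → 0 ≤ y → 2 * x * y ≤ H x y)

section ReIm

variable {A : Type*} [NormedRing A] [StarRing A] [NormedAlgebra ℂ A]

/-- The real part `(a + a*)/2` of an element of a complex `*`-algebra. -/
def reEl (a : A) : A := (2⁻¹ : ℂ) • (a + star a)

/-- The imaginary part `(a - a*)/(2i)` of an element of a complex `*`-algebra. -/
def imEl (a : A) : A := ((2 * Complex.I)⁻¹ : ℂ) • (a - star a)

end ReIm

/-! ### States -/

/-- A state on a unital complex `*`-algebra: a linear functional which is unital
and positive. -/
structure CState (A : Type*) [NormedRing A] [StarRing A] [NormedAlgebra ℂ A] where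
  toFun : A →ₗ[ℂ] ℂ
  map_one : toFun 1 = 1
  positive : ∀ a : A, 0 ≤ toFun (star a * a)

/-- The topology induced by a distance function, generated by its open balls. -/
def ballTopology {X : Type*} (d : X → X → ℝ) : TopologicalSpace X :=
  TopologicalSpace.generateFrom {s | ∃ (x : X) (ε : ℝ), 0 < ε ∧ s = {y | d x y < ε}}

/-- The Hausdorff distance between two sets, relative to a distance function. -/
def hausDist {X : Type*} (d : X → X → ℝ) (S T : Set X) : ℝ :=
  max (sSup {r | ∃ x ∈ S, r = sInf {s | ∃ y ∈ T, s = d x y}})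
      (sSup {r | ∃ y ∈ T, r = sInf {s | ∃ x ∈ S, s = d x y}})

/-- The diameter of a set relative to a distance function. -/
def setDiam {X : Type*} (d : X → X → ℝ) (S : Set X) : ℝ :=
  sSup {r | ∃ x ∈ S, ∃ y ∈ S, r = d x y}

/-- The weak-* topology on the state space. -/
def stateWeakTopology (A : Type*) [NormedRing A] [StarRing A] [NormedAlgebra ℂ A] :
    TopologicalSpace (CState A) :=
  TopologicalSpace.induced (fun (φ : CState A) (a : A) => φ.toFun a) Pi.topologicalSpace

/-- The Monge-Kantorovich metric associated with a Lipschitz seminorm `L` with domain `dom`. -/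
def mkDist {A : Type*} [NormedRing A] [StarRing A] [NormedAlgebra ℂ A]
    (dom : Set A) (L : A → ℝ) (φ ψ : CState A) : ℝ :=
  sSup {r | ∃ a ∈ dom, L a ≤ 1 ∧ r = ‖φ.toFun a - ψ.toFun a‖}

/-- The 1-level set of a pivot is nonempty. -/
def pivotLevelNonempty {D : Type*} [NormedRing D] [StarRing D] [NormedAlgebra ℂ D]
    (x : D) : Prop :=
  ∃ φ : CState D,
    φ.toFun (star (1 - x) * (1 - x)) = 0 ∧ φ.toFun ((1 - x) * star (1 - x)) = 0

/-! ### Quasi-Leibniz quantum compact metric spaces -/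

/-- An `F`-quasi-Leibniz quantum compact metric space structure on a unital C*-algebra `A`:
a Lipschitz seminorm `L` defined on a dense Jordan-Lie subalgebra `dom` of the self-adjoint
part of `A`, vanishing exactly on `ℝ1`, lower semicontinuous, whose Monge-Kantorovich metric
metrizes the weak-* topology on the state space, and satisfying the `F`-quasi-Leibniz
inequality. -/
structure QLSpace (A : Type*) [NormedRing A] [StarRing A] [CStarRing A]
    [NormedAlgebra ℂ A] [StarModule ℂ A] [CompleteSpace A]
    (F : ℝ → ℝ → ℝ → ℝ → ℝ) where
  dom : Set A
  L : A → ℝ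
  dom_selfAdjoint : ∀ a ∈ dom, IsSelfAdjoint a
  dom_dense : closure dom = {a : A | IsSelfAdjoint a}
  dom_add : ∀ a ∈ dom, ∀ b ∈ dom, a + b ∈ dom
  dom_smul : ∀ (t : ℝ), ∀ a ∈ dom, (t : ℂ) • a ∈ dom
  dom_jordan : ∀ a ∈ dom, ∀ b ∈ dom, (2⁻¹ : ℂ) • (a * b + b * a) ∈ dom
  dom_lie : ∀ a ∈ dom, ∀ b ∈ dom, ((2 * Complex.I)⁻¹ : ℂ) • (a * b - b * a) ∈ dom
  one_mem : (1 : A) ∈ dom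
  L_nonneg : ∀ a : A, 0 ≤ L a
  L_add : ∀ a ∈ dom, ∀ b ∈ dom, L (a + b) ≤ L a + L b
  L_smul : ∀ (t : ℝ), ∀ a ∈ dom, L ((t : ℂ) • a) = |t| * L a
  L_eq_zero_iff : ∀ a ∈ dom, (L a = 0 ↔ ∃ t : ℝ, a = (t : ℂ) • (1 : A))
  lowerSemicontinuous : IsClosed {a : A | a ∈ dom ∧ L a ≤ 1}
  leibniz_jordan : ∀ a ∈ dom, ∀ b ∈ dom,
      L ((2⁻¹ : ℂ) • (a * b + b * a)) ≤ F ‖a‖ ‖b‖ (L a) (L b)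
  leibniz_lie : ∀ a ∈ dom, ∀ b ∈ dom,
      L (((2 * Complex.I)⁻¹ : ℂ) • (a * b - b * a)) ≤ F ‖a‖ ‖b‖ (L a) (L b)
  mk_metrizes : ballTopology (mkDist dom L) = stateWeakTopology A
/-! ### Metrized quantum vector bundles -/

/-- An `(F,G,H)`-metrized quantum vector bundle: a left Hilbert module `M` over a unital
C*-algebra `A` equipped with an `F`-quasi-Leibniz quantum compact metric space structure,
together with a D-norm `D` defined on a dense subspace `Ddom` of `M`, dominating the
C*-Hilbert norm, with compact unit ball, and satisfying the inner and modular quasi-Leibniz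
inequalities with respect to `G` and `H`. -/
structure BundledMQVB (F : ℝ → ℝ → ℝ → ℝ → ℝ) (G : ℝ → ℝ → ℝ → ℝ) (H : ℝ → ℝ → ℝ) where
  A : Type
  [instRing : NormedRing A]
  [instStarRing : StarRing A]
  [instCStar : CStarRing A]
  [instAlg : NormedAlgebra ℂ A]
  [instStarMod : StarModule ℂ A]
  [instComplete : CompleteSpace A]
  M : Type
  [instM : NormedAddCommGroup M]
  [instMC : Module ℂ M]
  [instMA : Module A M]
  [instTower : IsScalarTower ℂ A M]
  [instMComplete : CompleteSpace M]
  base : QLSpace A F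
  inn : M → M → A
  Ddom : Set M
  D : M → ℝ
  inn_add_left : ∀ x y z : M, inn (x + y) z = inn x z + inn y z
  inn_smul_left : ∀ (a : A) (x y : M), inn (a • x) y = a * inn x y
  inn_smul_leftC : ∀ (c : ℂ) (x y : M), inn (c • x) y = c • inn x y
  inn_star : ∀ x y : M, star (inn x y) = inn y x
  inn_pos : ∀ x : M, ∃ b : A, inn x x = star b * b
  inn_definite : ∀ x : M, inn x x = 0 → x = 0
  norm_eq : ∀ x : M, ‖x‖ = Real.sqrt ‖inn x x‖
  Ddom_dense : Dense Ddom
  Ddom_add : ∀ x ∈ Ddom, ∀ y ∈ Ddom, x + y ∈ Ddom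
  Ddom_smul : ∀ (c : ℂ), ∀ x ∈ Ddom, c • x ∈ Ddom
  D_nonneg : ∀ x : M, 0 ≤ D x
  D_add : ∀ x ∈ Ddom, ∀ y ∈ Ddom, D (x + y) ≤ D x + D y
  D_smul : ∀ (c : ℂ), ∀ x ∈ Ddom, D (c • x) = ‖c‖ * D x
  norm_le_D : ∀ x ∈ Ddom, ‖x‖ ≤ D x
  D_ball_compact : IsCompact {x : M | x ∈ Ddom ∧ D x ≤ 1}
  D_leibniz : ∀ a ∈ base.dom, ∀ x ∈ Ddom,
      a • x ∈ Ddom ∧ D (a • x) ≤ G ‖a‖ (base.L a) (D x)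
  inn_leibniz : ∀ x ∈ Ddom, ∀ y ∈ Ddom,
      reEl (inn x y) ∈ base.dom ∧ imEl (inn x y) ∈ base.dom ∧
      base.L (reEl (inn x y)) ≤ H (D x) (D y) ∧
      base.L (imEl (inn x y)) ≤ H (D x) (D y)

attribute [instance] BundledMQVB.instRing BundledMQVB.instStarRing BundledMQVB.instCStar
  BundledMQVB.instAlg BundledMQVB.instStarMod BundledMQVB.instComplete
  BundledMQVB.instM BundledMQVB.instMC BundledMQVB.instMA BundledMQVB.instTower
  BundledMQVB.instMComplete

variable {F : ℝ → ℝ → ℝ → ℝ → ℝ} {G : ℝ → ℝ → ℝ → ℝ} {H : ℝ → ℝ → ℝ}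

/-- The closed ball of radius `r` for the D-norm of a metrized quantum vector bundle. -/
def BundledMQVB.Dball (Ω : BundledMQVB F G H) (r : ℝ) : Set Ω.M :=
  {ω | ω ∈ Ω.Ddom ∧ Ω.D ω ≤ r}

/-- The modular Monge-Kantorovich metric of a metrized quantum vector bundle. -/
def BundledMQVB.mkD (Ω : BundledMQVB F G H) (x y : Ω.M) : ℝ :=
  sSup {r | ∃ ξ ∈ Ω.Ddom, Ω.D ξ ≤ 1 ∧ r = ‖Ω.inn x ξ - Ω.inn y ξ‖}

/-- The `A`-weak topology on the module of a metrized quantum vector bundle. -/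
def BundledMQVB.aWeak (Ω : BundledMQVB F G H) : TopologicalSpace Ω.M :=
  TopologicalSpace.induced (fun (ω : Ω.M) (ξ : Ω.M) => Ω.inn ω ξ) Pi.topologicalSpace
/-! ### Modular bridges -/

/-- A modular bridge between two metrized quantum vector bundles. -/
structure ModularBridge (ΩA ΩB : BundledMQVB F G H) where
  Dalg : Type
  [instDRing : NormedRing Dalg]
  [instDStarRing : StarRing Dalg]
  [instDCStar : CStarRing Dalg]
  [instDAlg : NormedAlgebra ℂ Dalg]
  [instDStarMod : StarModule ℂ Dalg]
  [instDComplete : CompleteSpace Dalg]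
  J : Type
  [instJ : Nonempty J]
  pivot : Dalg
  piA : ΩA.A →⋆ₐ[ℂ] Dalg
  piB : ΩB.A →⋆ₐ[ℂ] Dalg
  piA_inj : Function.Injective piA
  piB_inj : Function.Injective piB
  pivot_norm : ‖pivot‖ = 1
  levelSet_nonempty : pivotLevelNonempty pivot
  anchors : J → ΩA.M
  coanchors : J → ΩB.M
  anchors_mem : ∀ j, anchors j ∈ ΩA.Ddom
  anchors_le : ∀ j, ΩA.D (anchors j) ≤ 1
  coanchors_mem : ∀ j, coanchors j ∈ ΩB.Ddom
  coanchors_le : ∀ j, ΩB.D (coanchors j) ≤ 1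

attribute [instance] ModularBridge.instDRing ModularBridge.instDStarRing
  ModularBridge.instDCStar ModularBridge.instDAlg ModularBridge.instDStarMod
  ModularBridge.instDComplete ModularBridge.instJ

namespace ModularBridge

variable {ΩA ΩB : BundledMQVB F G H}

/-- The bridge seminorm of a modular bridge. -/
def bn (γ : ModularBridge ΩA ΩB) (a : ΩA.A) (b : ΩB.A) : ℝ :=
  ‖γ.piA a * γ.pivot - γ.pivot * γ.piB b‖

/-- The deck seminorm of a modular bridge. -/
def dn (γ : ModularBridge ΩA ΩB) (ω : ΩA.M) (η : ΩB.M) : ℝ :=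
  ⨆ k : γ.J,
    max (γ.bn (ΩA.inn ω (γ.anchors k)) (ΩB.inn η (γ.coanchors k)))
        (γ.bn (ΩA.inn (γ.anchors k) ω) (ΩB.inn (γ.coanchors k) η))

/-- The basic reach of a modular bridge. -/
def basicReach (γ : ModularBridge ΩA ΩB) : ℝ :=
  max
    (sSup {r | ∃ a ∈ ΩA.base.dom, ΩA.base.L a ≤ 1 ∧
        r = sInf {s | ∃ b ∈ ΩB.base.dom, ΩB.base.L b ≤ 1 ∧ s = γ.bn a b}})
    (sSup {r | ∃ b ∈ ΩB.base.dom, ΩB.base.L b ≤ 1 ∧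
        r = sInf {s | ∃ a ∈ ΩA.base.dom, ΩA.base.L a ≤ 1 ∧ s = γ.bn a b}})

/-- The modular reach of a modular bridge. -/
def modularReach (γ : ModularBridge ΩA ΩB) : ℝ :=
  ⨆ j : γ.J, γ.dn (γ.anchors j) (γ.coanchors j)

/-- The imprint of a modular bridge. -/
def imprint (γ : ModularBridge ΩA ΩB) : ℝ :=
  max (hausDist ΩA.mkD (Set.range γ.anchors) (ΩA.Dball 1))
      (hausDist ΩB.mkD (Set.range γ.coanchors) (ΩB.Dball 1))

/-- The reach of a modular bridge. -/
def reach (γ : ModularBridge ΩA ΩB) : ℝ :=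
  max γ.basicReach (γ.modularReach + γ.imprint)

/-- The states of the bridge algebra in the 1-level set of the pivot. -/
def levelStates (γ : ModularBridge ΩA ΩB) : Set (CState γ.Dalg) :=
  {φ | φ.toFun (star (1 - γ.pivot) * (1 - γ.pivot)) = 0 ∧
       φ.toFun ((1 - γ.pivot) * star (1 - γ.pivot)) = 0}

/-- The height of a modular bridge. -/
def height (γ : ModularBridge ΩA ΩB) : ℝ :=
  max
    (hausDist (mkDist ΩA.base.dom ΩA.base.L) (Set.univ : Set (CState ΩA.A))
      {ψ | ∃ φ ∈ γ.levelStates, ∀ a : ΩA.A, ψ.toFun a = φ.toFun (γ.piA a)})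
    (hausDist (mkDist ΩB.base.dom ΩB.base.L) (Set.univ : Set (CState ΩB.A))
      {ψ | ∃ φ ∈ γ.levelStates, ∀ b : ΩB.A, ψ.toFun b = φ.toFun (γ.piB b)})

/-- The length of a modular bridge. -/
def length (γ : ModularBridge ΩA ΩB) : ℝ := max γ.reach γ.height

/-- The `l`-modular target set of `ω` for a modular bridge. -/
def mtarget (γ : ModularBridge ΩA ΩB) (ω : ΩA.M) (l : ℝ) : Set ΩB.M :=
  {η | η ∈ ΩB.Ddom ∧ ΩB.D η ≤ l ∧ γ.dn ω η ≤ l * γ.reach}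

/-- The `l`-target set of `a` for a modular bridge. -/
def atarget (γ : ModularBridge ΩA ΩB) (a : ΩA.A) (l : ℝ) : Set ΩB.A :=
  {b | b ∈ ΩB.base.dom ∧ ΩB.base.L b ≤ l ∧ γ.bn a b ≤ l * γ.basicReach}

/-- The reverse of a modular bridge. -/
def reverse (γ : ModularBridge ΩA ΩB) : ModularBridge ΩB ΩA where
  Dalg := γ.Dalg
  J := γ.J
  pivot := star γ.pivot
  piA := γ.piB
  piB := γ.piA
  piA_inj := γ.piB_inj
  piB_inj := γ.piA_inj
  pivot_norm := by rw [norm_star]; exact γ.pivot_norm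
  levelSet_nonempty := by
    obtain ⟨φ, h1, h2⟩ := γ.levelSet_nonempty
    refine ⟨φ, ?_, ?_⟩
    · have e1 : star ((1 : γ.Dalg) - star γ.pivot) = 1 - γ.pivot := by
        simp [star_sub]
      have e2 : (1 : γ.Dalg) - star γ.pivot = star (1 - γ.pivot) := by
        simp [star_sub]
      rw [e1, e2]; exact h2
    · have e1 : star ((1 : γ.Dalg) - star γ.pivot) = 1 - γ.pivot := by
        simp [star_sub]
      have e2 : (1 : γ.Dalg) - star γ.pivot = star (1 - γ.pivot) := by
        simp [star_sub]
      rw [e1, e2]; exact h1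
  anchors := γ.coanchors
  coanchors := γ.anchors
  anchors_mem := γ.coanchors_mem
  anchors_le := γ.coanchors_le
  coanchors_mem := γ.anchors_mem
  coanchors_le := γ.anchors_le

end ModularBridge

/-! ### Modular treks -/

/-- A modular trek: a finite chain of composable modular bridges. -/
inductive Trek (F : ℝ → ℝ → ℝ → ℝ → ℝ) (G : ℝ → ℝ → ℝ → ℝ) (H : ℝ → ℝ → ℝ) :
    BundledMQVB F G H → BundledMQVB F G H → Type 1
  | single {ΩA ΩB : BundledMQVB F G H} (γ : ModularBridge ΩA ΩB) : Trek F G H ΩA ΩB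
  | cons {ΩA ΩB ΩC : BundledMQVB F G H} (γ : ModularBridge ΩA ΩB)
      (Γ : Trek F G H ΩB ΩC) : Trek F G H ΩA ΩC

namespace Trek

/-- The length of a modular trek: the sum of the lengths of its bridges. -/
def length : ∀ {ΩA ΩB : BundledMQVB F G H}, Trek F G H ΩA ΩB → ℝ
  | _, _, .single γ => γ.length
  | _, _, .cons γ Γ => γ.length + Trek.length Γ

/-- The modular target set of a modular trek (the set of endpoints of `l`-itineraries). -/
def mtarget : ∀ {ΩA ΩB : BundledMQVB F G H}, Trek F G H ΩA ΩB → ΩA.M → ℝ → Set ΩB.M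
  | _, _, .single γ, ω, l => γ.mtarget ω l
  | _, _, .cons γ Γ, ω, l => {η | ∃ ξ ∈ γ.mtarget ω l, η ∈ Trek.mtarget Γ ξ l}

/-- The target set of a modular trek on the base algebras. -/
def atarget : ∀ {ΩA ΩB : BundledMQVB F G H}, Trek F G H ΩA ΩB → ΩA.A → ℝ → Set ΩB.A
  | _, _, .single γ, a, l => γ.atarget a l
  | _, _, .cons γ Γ, a, l => {b | ∃ c ∈ γ.atarget a l, b ∈ Trek.atarget Γ c l}

end Trek

/-! ### States on a C*-algebra -/

section States

variable {A : Type*} [NormedRing A] [StarRing A] [CStarRing A] [NormedAlgebra ℂ A]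
  [StarModule ℂ A] [CompleteSpace A]

/-- The degenerate case of the Cauchy–Schwarz inequality for a state: `φ(u*u) = 0` forces
`φ(u*v) = φ(v*u) = 0`. It is read off from `φ((v + tu)*(v + tu)) ≥ 0` for real and for purely
imaginary `t`. -/
lemma CState.null_mul (φ : CState A) {u : A} (hu : φ.toFun (star u * u) = 0) (v : A) :
    φ.toFun (star u * v) = 0 ∧ φ.toFun (star v * u) = 0 := by
  have key : ∀ (w : A), φ.toFun (star w * w) = 0 →
      φ.toFun (star w * v) + φ.toFun (star v * w) = 0 := by
    intro w hw
    have h0 := φ.positive v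
    have ht : ∀ t : ℝ, 0 ≤ φ.toFun (star v * v) +
        (t : ℂ) * (φ.toFun (star w * v) + φ.toFun (star v * w)) := by
      intro t
      have h := φ.positive (v + (t : ℂ) • w)
      have e : star (v + (t : ℂ) • w) * (v + (t : ℂ) • w) =
          star v * v + (t : ℂ) • (star w * v) + (t : ℂ) • (star v * w)
            + ((t : ℂ) * t) • (star w * w) := by
        simp only [star_add, star_smul, add_mul, mul_add, smul_mul_assoc, mul_smul_comm,
          smul_smul, smul_add, Complex.star_def, Complex.conj_ofReal]
        abel
      rw [e] at h
      simp only [map_add, map_smul, hw, smul_eq_mul, mul_zero, add_zero] at h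
      rw [mul_add, ← add_assoc]
      exact h
    set S := φ.toFun (star w * v) + φ.toFun (star v * w) with hS
    have him : S.im = 0 := by
      have h1 := (Complex.le_def.1 (ht 1)).2
      have h2 := (Complex.le_def.1 h0).2
      simp at h1 h2
      linarith
    have hre : S.re = 0 := by
      by_contra hne
      have h1 := (Complex.le_def.1 (ht (-((φ.toFun (star v * v)).re + 1) / S.re))).1
      simp only [Complex.zero_re, Complex.add_re, Complex.mul_re, Complex.ofReal_re,
        Complex.ofReal_im, zero_mul, sub_zero] at h1
      rw [div_mul_cancel₀ _ hne] at h1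
      linarith
    exact Complex.ext hre him
  have h1 := key u hu
  have h2 := key (Complex.I • u) (by simp [star_smul, hu])
  simp only [star_smul, Complex.star_def, Complex.conj_I, smul_mul_assoc, mul_smul_comm, map_smul,
    smul_eq_mul] at h2
  have h3 : φ.toFun (star v * u) = φ.toFun (star u * v) := by
    have h4 : Complex.I * (φ.toFun (star v * u) - φ.toFun (star u * v)) = 0 := by
      linear_combination h2
    have h5 := (mul_eq_zero.1 h4).resolve_left Complex.I_ne_zero
    exact sub_eq_zero.1 h5
  have h6 : φ.toFun (star u * v) = 0 := by
    rw [h3] at h1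
    have : (2 : ℂ) * φ.toFun (star u * v) = 0 := by linear_combination h1
    simpa using this
  exact ⟨h6, h3.trans h6⟩

/-- `‖a‖ - a` is a square `e*e` when `a` is self-adjoint. -/
lemma exists_norm_sub_eq_star_mul_self {a : A} (ha : IsSelfAdjoint a) :
    ∃ e : A, (‖a‖ : ℂ) • (1 : A) - a = star e * e := by
  let _ : CStarAlgebra A := {}
  let _ : PartialOrder A := CStarAlgebra.spectralOrder A
  have _ : StarOrderedRing A := CStarAlgebra.spectralOrderedRing A
  have h := ha.le_algebraMap_norm_self
  have h2 := CStarAlgebra.nonneg_iff_eq_star_mul_self.1 (sub_nonneg.2 h)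
  obtain ⟨e, he⟩ := h2
  refine ⟨e, ?_⟩
  rw [← he, Algebra.algebraMap_eq_smul_one]
  rfl

lemma CState.re_le_of_isSelfAdjoint (φ : CState A) {a : A} (ha : IsSelfAdjoint a) :
    (φ.toFun a).re ≤ ‖a‖ ∧ (φ.toFun a).im = 0 := by
  obtain ⟨e, he⟩ := exists_norm_sub_eq_star_mul_self ha
  have h := φ.positive e
  rw [← he, map_sub, map_smul, φ.map_one] at h
  have h1 := (Complex.le_def.1 h).1
  have h2 := (Complex.le_def.1 h).2
  simp at h1 h2
  exact ⟨h1, h2⟩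

lemma CState.re_le (φ : CState A) (a : A) : (φ.toFun a).re ≤ ‖a‖ := by
  have h1 := (φ.re_le_of_isSelfAdjoint (IsSelfAdjoint.add_star_self a)).1
  have h2 := (φ.re_le_of_isSelfAdjoint (a := Complex.I • (a - star a)) (by
    rw [IsSelfAdjoint, star_smul, star_sub, star_star, Complex.star_def, Complex.conj_I, neg_smul,
      ← smul_neg, neg_sub])).2
  have h3 := norm_add_le a (star a)
  rw [norm_star] at h3
  simp at h1 h2
  linarith

lemma CState.norm_le (φ : CState A) (a : A) : ‖φ.toFun a‖ ≤ ‖a‖ := by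
  by_cases h0 : φ.toFun a = 0
  · simp [h0]
  -- rotate `a` by a phase so that the value of `φ` becomes a nonnegative real
  have hn : ‖φ.toFun a‖ ≠ 0 := norm_ne_zero_iff.2 h0
  set c : ℂ := (starRingEnd ℂ) (φ.toFun a) / ‖φ.toFun a‖ with hc
  have h := φ.re_le (c • a)
  have hcn : ‖c‖ = 1 := by
    rw [hc, norm_div, RCLike.norm_conj, Complex.norm_real, norm_norm, div_self hn]
  have e : c * φ.toFun a = (‖φ.toFun a‖ : ℂ) := by
    rw [hc, div_mul_eq_mul_div, Complex.conj_mul']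
    field_simp
  rw [map_smul, norm_smul, hcn, one_mul, smul_eq_mul, e, Complex.ofReal_re] at h
  exact h

/-- A contractive functional `g` with `g 1 = 1` is positive. -/
lemma nonneg_of_contractive (g : A →ₗ[ℂ] ℂ) (hg : ∀ a, ‖g a‖ ≤ ‖a‖) (h1 : g 1 = 1) (d : A) :
    0 ≤ g (star d * d) := by
  let _ : CStarAlgebra A := {}
  -- `|g (a + i t)|² ≤ ‖a + i t‖² ≤ ‖a‖² + t²` for all real `t` makes `g a` real
  have hsa : ∀ a : A, IsSelfAdjoint a → (g a).im = 0 := by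
    intro a ha
    have ht : ∀ t : ℝ, 2 * t * (g a).im ≤ ‖a‖ ^ 2 := by
      intro t
      have e1 : ‖a + (Complex.I * t) • (1 : A)‖ ^ 2 ≤ ‖a‖ ^ 2 + t ^ 2 := by
        have e2 : star (a + (Complex.I * t) • (1 : A)) * (a + (Complex.I * t) • (1 : A)) =
            a * a + ((t ^ 2 : ℝ) : ℂ) • (1 : A) := by
          rw [star_add, ha.star_eq, star_smul, star_one]
          simp only [add_mul, mul_add, smul_mul_assoc, mul_smul_comm, one_mul, mul_one, smul_add,
            smul_smul, star_mul', Complex.star_def, Complex.conj_I, Complex.conj_ofReal]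
          have e3 : Complex.I * (t : ℂ) * (-Complex.I * t) = ((t ^ 2 : ℝ) : ℂ) := by
            push_cast
            linear_combination (-(t : ℂ) ^ 2) * Complex.I_mul_I
          have e4 : (-Complex.I * (t : ℂ)) • a = - ((Complex.I * t) • a) := by
            rw [neg_mul, neg_smul]
          rw [e3, e4]
          abel
        rw [pow_two, ← CStarRing.norm_star_mul_self, e2]
        refine (norm_add_le _ _).trans ?_
        gcongr
        · rw [pow_two]; exact norm_mul_le a a
        · rw [norm_smul, Complex.norm_real, Real.norm_eq_abs, abs_of_nonneg (sq_nonneg t)]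
          have : ‖(1 : A)‖ ≤ 1 := by
            have h := CStarRing.norm_star_mul_self (x := (1 : A))
            rw [star_one, one_mul] at h
            by_contra! hlt
            nlinarith
          nlinarith [sq_nonneg t]
      have e5 := hg (a + (Complex.I * t) • (1 : A))
      rw [map_add, map_smul, h1, smul_eq_mul, mul_one] at e5
      have e6 : ‖g a + Complex.I * t‖ ^ 2 = (g a).re ^ 2 + ((g a).im + t) ^ 2 := by
        rw [← Complex.normSq_eq_norm_sq, Complex.normSq_apply]
        simp
        ring
      have e7 : ‖g a + Complex.I * t‖ ^ 2 ≤ ‖a + (Complex.I * t) • (1 : A)‖ ^ 2 := by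
        gcongr
      nlinarith [sq_nonneg (g a).re, sq_nonneg (g a).im]
    by_contra hne
    have := ht ((‖a‖ ^ 2 + 1) / (2 * (g a).im))
    have e : 2 * ((‖a‖ ^ 2 + 1) / (2 * (g a).im)) * (g a).im = ‖a‖ ^ 2 + 1 := by
      field_simp
    linarith
  set a := star d * d with ha
  have haS : IsSelfAdjoint a := IsSelfAdjoint.star_mul_self d
  have him := hsa a haS
  -- `0 ≤ ‖a‖ - a ≤ ‖a‖`, hence `|‖a‖ - g a| ≤ ‖a‖`
  have hn : ‖(‖a‖ : ℂ) • (1 : A) - a‖ ≤ ‖a‖ := by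
    let _ : PartialOrder A := CStarAlgebra.spectralOrder A
    have _ : StarOrderedRing A := CStarAlgebra.spectralOrderedRing A
    have e : (‖a‖ : ℂ) • (1 : A) = algebraMap ℝ A ‖a‖ := by
      rw [Algebra.algebraMap_eq_smul_one]; rfl
    have h0 : 0 ≤ a := star_mul_self_nonneg d
    have h2 : 0 ≤ algebraMap ℝ A ‖a‖ - a := sub_nonneg.2 haS.le_algebraMap_norm_self
    rw [e]
    exact (CStarAlgebra.norm_le_iff_le_algebraMap _ (norm_nonneg a) h2).2 (sub_le_self _ h0)
  have h3 := (Complex.re_le_norm _).trans ((hg _).trans hn)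
  rw [map_sub, map_smul, h1] at h3
  rw [Complex.le_def]
  simp at h3 ⊢
  exact ⟨h3, him.symm⟩

/-- Some state attains the norm of a given self-adjoint element. A norming functional of
`‖c‖ ± c`, an element of norm `2‖c‖` for one of the two signs, must have value `1` at `1`
and `±‖c‖` at `c`. -/
lemma exists_state_norm_eq [Nontrivial A] {c : A} (hc : IsSelfAdjoint c) :
    ∃ ψ : CState A, ‖ψ.toFun c‖ = ‖c‖ := by
  have hor : ‖c‖ ∈ spectrum ℝ c ∨ -‖c‖ ∈ spectrum ℝ c := by
    let _ : CStarAlgebra A := {}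
    exact CStarAlgebra.norm_or_neg_norm_mem_spectrum hc
  have hone : ‖(1 : A)‖ = 1 := CStarRing.norm_one
  have main : ∀ e : A, IsSelfAdjoint e → ‖e‖ ∈ spectrum ℝ e →
      ∃ ψ : CState A, ‖ψ.toFun e‖ = ‖e‖ := by
    intro e he hspec
    have hx : ‖(‖e‖ : ℂ) • (1 : A) + e‖ = 2 * ‖e‖ := by
      apply le_antisymm
      · refine (norm_add_le _ _).trans ?_
        rw [norm_smul, hone, Complex.norm_real, norm_norm]; linarith
      · have h1 : ‖e‖ + ‖e‖ ∈ spectrum ℝ (algebraMap ℝ A ‖e‖ + e) := by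
          exact spectrum.add_mem_add_iff.2 hspec
        have h2 := spectrum.norm_le_norm_of_mem h1
        rw [Algebra.algebraMap_eq_smul_one] at h2
        have h3 := le_abs_self (‖e‖ + ‖e‖)
        rw [Real.norm_eq_abs] at h2
        calc 2 * ‖e‖ = ‖e‖ + ‖e‖ := by ring
          _ ≤ ‖‖e‖ • (1 : A) + e‖ := h3.trans h2
          _ = _ := rfl
    by_cases h0 : ‖e‖ = 0
    · -- any state will do: take a norming functional of `1`
      obtain ⟨g, hg, hg1⟩ := exists_dual_vector ℂ (1 : A) (by rw [hone]; exact one_ne_zero)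
      have hgc : ∀ a, ‖g a‖ ≤ ‖a‖ := fun a => by simpa [hg] using g.le_opNorm a
      have h1 : g 1 = 1 := by rw [hg1, hone]; simp
      refine ⟨⟨g, h1, nonneg_of_contractive (g : A →ₗ[ℂ] ℂ) hgc h1⟩, ?_⟩
      rw [norm_eq_zero.1 h0]; simp
    · obtain ⟨g, hg, hg1⟩ := exists_dual_vector ℂ ((‖e‖ : ℂ) • (1 : A) + e) (by
        rw [hx]; simpa using h0)
      have hpos : 0 < ‖e‖ := lt_of_le_of_ne (norm_nonneg _) (Ne.symm h0)
      have hgc : ∀ a, ‖g a‖ ≤ ‖a‖ := fun a => by simpa [hg] using g.le_opNorm a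
      have hge := hgc e
      have hgo := hgc 1
      rw [hone] at hgo
      rw [map_add, map_smul, hx, smul_eq_mul] at hg1
      have hr := congrArg Complex.re hg1
      simp at hr
      have r1 : (g 1).re ≤ 1 := (Complex.re_le_norm _).trans hgo
      have r2 : (g e).re ≤ ‖e‖ := (Complex.re_le_norm _).trans hge
      have r3 : (g 1).re = 1 := by
        apply le_antisymm r1
        by_contra! hlt
        nlinarith
      have r4 : (g 1).im = 0 := by
        have h5 : ‖g 1‖ ^ 2 = (g 1).re ^ 2 + (g 1).im ^ 2 := by
          rw [← Complex.normSq_eq_norm_sq, Complex.normSq_apply]; ring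
        have h6 : ‖g 1‖ ^ 2 ≤ 1 := by
          have := norm_nonneg (g 1)
          nlinarith
        rw [r3] at h5
        have : (g 1).im ^ 2 ≤ 0 := by linarith
        exact pow_eq_zero_iff two_ne_zero |>.1 (le_antisymm this (sq_nonneg _))
      have h1 : g 1 = 1 := Complex.ext (by simpa using r3) (by simpa using r4)
      refine ⟨⟨g, h1, nonneg_of_contractive (g : A →ₗ[ℂ] ℂ) hgc h1⟩, le_antisymm hge ?_⟩
      have r5 : ‖e‖ ≤ (g e).re := by rw [r3] at hr; linarith
      exact r5.trans (Complex.re_le_norm _)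
  rcases hor with h | h
  · exact main c hc h
  · obtain ⟨ψ, hψ⟩ := main (-c) hc.neg (by
      rw [norm_neg, ← spectrum.neg_eq]
      simpa using h)
    exact ⟨ψ, by simpa using hψ⟩

end States

/-! ### The Monge–Kantorovich metric -/

section MongeKantorovich

variable {A : Type*} [NormedRing A] [StarRing A] [CStarRing A] [NormedAlgebra ℂ A]
  [StarModule ℂ A] [CompleteSpace A]

/-- The convex combination `(1 - t)φ + tψ` of two states. -/
def CState.mix (φ ψ : CState A) (t : ℝ) (h0 : 0 ≤ t) (h1 : t ≤ 1) : CState A where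
  toFun := ((1 - t : ℝ) : ℂ) • φ.toFun + (t : ℂ) • ψ.toFun
  map_one := by simp [φ.map_one, ψ.map_one]
  positive a := by
    have e1 : (0 : ℂ) ≤ ((1 - t : ℝ) : ℂ) := by exact_mod_cast sub_nonneg.2 h1
    have e2 : (0 : ℂ) ≤ (t : ℂ) := by exact_mod_cast h0
    exact add_nonneg (mul_nonneg e1 (φ.positive a)) (mul_nonneg e2 (ψ.positive a))

lemma CState.mix_apply (φ ψ : CState A) (t : ℝ) (h0 : 0 ≤ t) (h1 : t ≤ 1) (a : A) :
    (φ.mix ψ t h0 h1).toFun a = (1 - t) * φ.toFun a + t * ψ.toFun a := by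
  simp [CState.mix]

lemma mkDist_nonneg (Q : QLSpace A F) (φ ψ : CState A) : 0 ≤ mkDist Q.dom Q.L φ ψ := by
  apply Real.sSup_nonneg
  rintro r ⟨a, -, -, rfl⟩
  exact norm_nonneg _

lemma mkDist_comm (Q : QLSpace A F) (φ ψ : CState A) :
    mkDist Q.dom Q.L φ ψ = mkDist Q.dom Q.L ψ φ := by
  simp only [mkDist, norm_sub_rev]

/-- A positive value of `mkDist` is a genuine supremum, since unbounded sets have supremum `0`
in `ℝ`. -/
lemma bound_of_mkDist_pos (Q : QLSpace A F) {φ ψ : CState A} (h : 0 < mkDist Q.dom Q.L φ ψ) :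
    ∃ C, ∀ a ∈ Q.dom, Q.L a ≤ 1 → ‖φ.toFun a - ψ.toFun a‖ ≤ C := by
  by_cases hb : BddAbove {r | ∃ a ∈ Q.dom, Q.L a ≤ 1 ∧ r = ‖φ.toFun a - ψ.toFun a‖}
  · obtain ⟨C, hC⟩ := hb
    exact ⟨C, fun a ha hL => hC ⟨a, ha, hL, rfl⟩⟩
  · rw [mkDist, Real.sSup_of_not_bddAbove hb] at h
    exact absurd h (lt_irrefl _)

lemma isOpen_stateWeak (a : A) {U : Set ℂ} (hU : IsOpen U) :
    @IsOpen _ (stateWeakTopology A) {χ : CState A | χ.toFun a ∈ U} := by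
  refine isOpen_induced_iff.2 ⟨(fun f : A → ℂ => f a) ⁻¹' U, hU.preimage (continuous_apply a), rfl⟩

/-- Two states are at finite Monge–Kantorovich distance. This has to be extracted from
`mk_metrizes`, because an infinite supremum is recorded as `0` by `mkDist`. If `φ` and `ψ` were
at infinite distance, so would be any two distinct points of the segment `[φ, ψ]`; every ball
would then contain all points of the segment but at most one, so that the ball topology would
induce on the segment a topology coarser than the cofinite one, whereas the weak-* topology
is Hausdorff there. -/
lemma exists_mk_bound (Q : QLSpace A F) (φ ψ : CState A) :
    ∃ C, ∀ a ∈ Q.dom, Q.L a ≤ 1 → ‖φ.toFun a - ψ.toFun a‖ ≤ C := by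
  by_contra hinf
  obtain ⟨a, ha⟩ : ∃ a, φ.toFun a ≠ ψ.toFun a := by
    by_contra! hall
    exact hinf ⟨0, fun a _ _ => by simp [hall a]⟩
  let I := Set.Icc (0 : ℝ) 1
  let f : I → CState A := fun t => φ.mix ψ t t.2.1 t.2.2
  have hdiff : ∀ (s t : I) (c : A), (f s).toFun c - (f t).toFun c =
      ((s : ℝ) - (t : ℝ) : ℝ) * (ψ.toFun c - φ.toFun c) := by
    intro s t c
    simp only [f, CState.mix_apply]
    push_cast
    ring
  have hball : ∀ (χ : CState A) (ε : ℝ), 0 < ε →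
      {t : I | mkDist Q.dom Q.L χ (f t) < ε}ᶜ.Subsingleton := by
    intro χ ε hε s hs t ht
    simp only [Set.mem_compl_iff, Set.mem_ofPred_eq, not_lt] at hs ht
    obtain ⟨C, hC⟩ := bound_of_mkDist_pos Q (hε.trans_le hs)
    obtain ⟨C', hC'⟩ := bound_of_mkDist_pos Q (hε.trans_le ht)
    by_contra hst
    have hst' : (s : ℝ) - t ≠ 0 := fun h => hst (Subtype.ext (sub_eq_zero.1 h))
    apply hinf
    refine ⟨(C + C') / |(s : ℝ) - t|, fun c hc hL => ?_⟩
    rw [le_div_iff₀ (abs_pos.2 hst')]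
    have h1 : ‖(f s).toFun c - (f t).toFun c‖ ≤ C + C' := by
      calc _ = ‖(χ.toFun c - (f t).toFun c) - (χ.toFun c - (f s).toFun c)‖ := by
            congr 1; ring
        _ ≤ _ := norm_sub_le _ _
        _ ≤ C + C' := by linarith [hC c hc hL, hC' c hc hL]
    rw [hdiff, norm_mul, Complex.norm_real, Real.norm_eq_abs, norm_sub_rev] at h1
    linarith
  -- preimages of open sets under the parametrization of the segment are empty or cofinite
  have hcont : ∀ U : Set (CState A), @IsOpen _ (stateWeakTopology A) U →
      (f ⁻¹' U).Nonempty → (f ⁻¹' U)ᶜ.Finite := by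
    intro U hU
    rw [← Q.mk_metrizes] at hU
    induction hU with
    | basic s hs =>
      obtain ⟨χ, ε, hε, rfl⟩ := hs
      exact fun _ => (hball χ ε hε).finite
    | univ => simp
    | inter s t _ _ ihs iht =>
      intro hne
      rw [Set.preimage_inter] at hne ⊢
      rw [Set.compl_inter]
      exact (ihs (hne.mono Set.inter_subset_left)).union (iht (hne.mono Set.inter_subset_right))
    | sUnion S _ ih =>
      rintro ⟨x, s, hs, hx⟩
      exact (ih s hs ⟨x, hx⟩).subset
        (Set.compl_subset_compl.2 (Set.preimage_mono (Set.subset_sUnion_of_mem hs)))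
  obtain ⟨U, V, hU, hV, hφ, hψ, hUV⟩ := t2_separation ha
  have hfU := hcont _ (isOpen_stateWeak a hU)
    ⟨⟨0, by simp [I]⟩, by simpa [f, CState.mix_apply] using hφ⟩
  have hfV := hcont _ (isOpen_stateWeak a hV)
    ⟨⟨1, by simp [I]⟩, by simpa [f, CState.mix_apply] using hψ⟩
  have huniv : (Set.univ : Set I).Finite := by
    refine (hfU.union hfV).subset ?_
    intro t _
    by_contra hcon
    simp only [Set.mem_union, Set.mem_compl_iff, Set.mem_preimage, Set.mem_ofPred_eq,
      not_or, not_not] at hcon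
    exact Set.disjoint_left.1 hUV hcon.1 hcon.2
  exact (Set.Icc_infinite (zero_lt_one' ℝ)) (Set.finite_univ_iff.1 huniv)

lemma norm_sub_le_mkDist (Q : QLSpace A F) (φ ψ : CState A) {a : A} (ha : a ∈ Q.dom)
    (hL : Q.L a ≤ 1) : ‖φ.toFun a - ψ.toFun a‖ ≤ mkDist Q.dom Q.L φ ψ := by
  obtain ⟨C, hC⟩ := exists_mk_bound Q φ ψ
  refine le_csSup ⟨C, ?_⟩ ⟨a, ha, hL, rfl⟩
  rintro r ⟨c, hc, hcL, rfl⟩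
  exact hC c hc hcL

lemma norm_sub_le_mul_mkDist (Q : QLSpace A F) (φ ψ : CState A) {a : A} (ha : a ∈ Q.dom) :
    ‖φ.toFun a - ψ.toFun a‖ ≤ Q.L a * mkDist Q.dom Q.L φ ψ := by
  rcases (Q.L_nonneg a).eq_or_lt with h0 | hpos
  · rw [← h0, zero_mul]
    obtain ⟨t, rfl⟩ := (Q.L_eq_zero_iff a ha).1 h0.symm
    simp [φ.map_one, ψ.map_one]
  · have h := norm_sub_le_mkDist Q φ ψ (Q.dom_smul (Q.L a)⁻¹ a ha) (by
      rw [Q.L_smul _ _ ha, abs_of_pos (inv_pos.2 hpos), inv_mul_cancel₀ hpos.ne'])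
    rw [map_smul, map_smul, ← smul_sub, norm_smul, Complex.norm_real, Real.norm_eq_abs,
      abs_of_pos (inv_pos.2 hpos), inv_mul_le_iff₀ hpos] at h
    exact h

/-- The state space has finite radius around any of its points. Otherwise, pick `ψₙ` with
`mk(φ, ψₙ) > n + 1`; the states `(1 - 1/(n+1))φ + ψₙ/(n+1)` converge weakly to `φ` while staying
outside the unit ball around `φ`, which is weakly open. -/
lemma exists_mk_radius (Q : QLSpace A F) (φ : CState A) :
    ∃ R, ∀ ψ, mkDist Q.dom Q.L φ ψ ≤ R := by
  by_contra! hunb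
  choose ψ hψ using fun n : ℕ => hunb ((n : ℝ) + 1)
  have hn : ∀ n : ℕ, (0 : ℝ) < (n : ℝ) + 1 := fun n => by positivity
  let χ : ℕ → CState A := fun n => φ.mix (ψ n) (1 / ((n : ℝ) + 1)) (by positivity)
    ((div_le_one (hn n)).2 (by linarith [Nat.cast_nonneg (α := ℝ) n]))
  have hχ : ∀ n a, φ.toFun a - (χ n).toFun a =
      ((1 / ((n : ℝ) + 1) : ℝ) : ℂ) * (φ.toFun a - (ψ n).toFun a) := by
    intro n a
    simp only [χ, CState.mix_apply]
    ring
  have hself : mkDist Q.dom Q.L φ φ < 1 := by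
    refine lt_of_le_of_lt (Real.sSup_le ?_ le_rfl) one_pos
    rintro r ⟨a, -, -, rfl⟩
    simp
  have hopen : @IsOpen _ (stateWeakTopology A) {y | mkDist Q.dom Q.L φ y < 1} := by
    rw [← Q.mk_metrizes]
    exact TopologicalSpace.GenerateOpen.basic _ ⟨φ, 1, one_pos, rfl⟩
  have htend : Filter.Tendsto χ Filter.atTop (@nhds _ (stateWeakTopology A) φ) := by
    rw [stateWeakTopology, nhds_induced, Filter.tendsto_comap_iff, tendsto_pi_nhds]
    intro a
    rw [tendsto_iff_norm_sub_tendsto_zero]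
    have h0 : Filter.Tendsto (fun n : ℕ => 1 / ((n : ℝ) + 1) * (2 * ‖a‖)) Filter.atTop
        (nhds 0) := by
      simpa using (tendsto_one_div_add_atTop_nhds_zero_nat (𝕜 := ℝ)).mul_const (2 * ‖a‖)
    refine squeeze_zero (fun n => norm_nonneg _) (fun n => ?_) h0
    simp only [Function.comp]
    rw [norm_sub_rev, hχ, norm_mul, Complex.norm_real, Real.norm_eq_abs,
      abs_of_nonneg (by positivity)]
    gcongr
    refine (norm_sub_le _ _).trans ?_
    linarith [φ.norm_le a, (ψ n).norm_le a]
  have hev := htend.eventually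
    (@IsOpen.mem_nhds _ (stateWeakTopology A) _ _ hopen hself)
  obtain ⟨n, hlt⟩ := hev.exists
  have hle : mkDist Q.dom Q.L φ (ψ n) ≤ (n : ℝ) + 1 := by
    refine Real.sSup_le ?_ (hn n).le
    rintro r ⟨a, ha, hL, rfl⟩
    have h1 := (norm_sub_le_mkDist Q φ (χ n) ha hL).trans hlt.le
    rw [hχ, norm_mul, Complex.norm_real, Real.norm_eq_abs, abs_of_nonneg (by positivity),
      one_div, inv_mul_le_iff₀ (hn n), mul_one] at h1
    exact h1
  exact absurd (hψ n) (not_lt.2 hle)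

/-- If `T` is nonempty, each state is within `hausDist + δ` of some element of `T`. -/
lemma exists_mkDist_lt (Q : QLSpace A F) {T : Set (CState A)} (hT : T.Nonempty) (ψ : CState A)
    {δ : ℝ} (hδ : 0 < δ) :
    ∃ χ ∈ T, mkDist Q.dom Q.L ψ χ <
      hausDist (mkDist Q.dom Q.L) (Set.univ : Set (CState A)) T + δ := by
  obtain ⟨χ₀, hχ₀⟩ := hT
  obtain ⟨R, hR⟩ := exists_mk_radius Q χ₀
  have hbdd : ∀ x : CState A, BddBelow {s | ∃ y ∈ T, s = mkDist Q.dom Q.L x y} := by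
    rintro x
    refine ⟨0, ?_⟩
    rintro s ⟨y, -, rfl⟩
    exact mkDist_nonneg Q x y
  have h1 : sInf {s | ∃ y ∈ T, s = mkDist Q.dom Q.L ψ y} ≤
      hausDist (mkDist Q.dom Q.L) (Set.univ : Set (CState A)) T := by
    refine le_trans (le_csSup (s := {r | ∃ x ∈ (Set.univ : Set (CState A)),
      r = sInf {s | ∃ y ∈ T, s = mkDist Q.dom Q.L x y}}) ⟨R, ?_⟩ ⟨ψ, Set.mem_univ _, rfl⟩)
      (le_max_left _ _)
    rintro r ⟨x, -, rfl⟩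
    exact (csInf_le (hbdd x) ⟨χ₀, hχ₀, rfl⟩).trans (by rw [mkDist_comm]; exact hR x)
  obtain ⟨s, ⟨χ, hχ, rfl⟩, hs⟩ := exists_lt_of_csInf_lt
    (s := {s | ∃ y ∈ T, s = mkDist Q.dom Q.L ψ y}) ⟨_, χ₀, hχ₀, rfl⟩
    (h1.trans_lt (lt_add_of_pos_right _ hδ))
  exact ⟨χ, hχ, hs⟩

end MongeKantorovich

/-! ### The inner product and the modular Monge–Kantorovich metric -/

section Bundle

variable (Ω : BundledMQVB F G H)

lemma inn_smul_right (c : ℂ) (x y : Ω.M) :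
    Ω.inn x (c • y) = (starRingEnd ℂ) c • Ω.inn x y := by
  rw [← Ω.inn_star, Ω.inn_smul_leftC, star_smul, Ω.inn_star]
  rfl

lemma inn_add_right (x y z : Ω.M) : Ω.inn x (y + z) = Ω.inn x y + Ω.inn x z := by
  rw [← Ω.inn_star, Ω.inn_add_left, star_add, Ω.inn_star, Ω.inn_star]

lemma inn_zero_left (y : Ω.M) : Ω.inn 0 y = 0 := by
  have h := Ω.inn_smul_leftC 0 0 y
  rwa [zero_smul, zero_smul] at h

lemma inn_zero_right (x : Ω.M) : Ω.inn x 0 = 0 := by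
  rw [← Ω.inn_star, inn_zero_left, star_zero]

lemma inn_isSelfAdjoint (x : Ω.M) : IsSelfAdjoint (Ω.inn x x) := Ω.inn_star x x

lemma norm_inn_self (x : Ω.M) : ‖Ω.inn x x‖ = ‖x‖ ^ 2 := by
  rw [Ω.norm_eq, Real.sq_sqrt (norm_nonneg _)]

lemma norm_unit_smul {c : ℂ} (hc : ‖c‖ = 1) (x : Ω.M) : ‖c • x‖ = ‖x‖ := by
  rw [Ω.norm_eq, Ω.norm_eq, Ω.inn_smul_leftC, inn_smul_right, norm_smul, norm_smul,
    RCLike.norm_conj, hc, one_mul, one_mul]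

/-- A crude substitute for the Cauchy–Schwarz inequality, from the polarization identity; only
the boundedness of the suprema in the definitions depends on it. -/
lemma norm_inn_le (x y : Ω.M) : ‖Ω.inn x y‖ ≤ (‖x‖ + ‖y‖) ^ 2 := by
  have hb : ∀ c : ℂ, ‖c‖ = 1 → ‖Ω.inn (x + c • y) (x + c • y)‖ ≤ (‖x‖ + ‖y‖) ^ 2 := by
    intro c hc
    rw [norm_inn_self]
    gcongr
    exact (norm_add_le _ _).trans (by rw [norm_unit_smul Ω hc])
  have hpol : (4 : ℂ) • Ω.inn x y =
      (Ω.inn (x + (1 : ℂ) • y) (x + (1 : ℂ) • y)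
        - Ω.inn (x + (-1 : ℂ) • y) (x + (-1 : ℂ) • y))
      + (Complex.I • Ω.inn (x + Complex.I • y) (x + Complex.I • y)
        - Complex.I • Ω.inn (x + (-Complex.I) • y) (x + (-Complex.I) • y)) := by
    simp only [Ω.inn_add_left, inn_add_right, Ω.inn_smul_leftC, inn_smul_right, map_neg, map_one,
      Complex.conj_I]
    match_scalars <;> ring_nf <;> simp [Complex.I_sq] <;> norm_num
  have h1 := hb 1 (by simp)
  have h2 := hb (-1) (by simp)
  have h3 := hb Complex.I (by simp)
  have h4 := hb (-Complex.I) (by simp)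
  have h5 := congrArg norm hpol
  rw [norm_smul] at h5
  have h6 := h5.le.trans ((norm_add_le _ _).trans (add_le_add (norm_sub_le _ _) (norm_sub_le _ _)))
  simp only [norm_smul, Complex.norm_I, one_mul, Complex.norm_ofNat] at h6
  linarith

lemma norm_le_of_D_le {x : Ω.M} (hx : x ∈ Ω.Ddom) {r : ℝ} (hr : Ω.D x ≤ r) : ‖x‖ ≤ r :=
  (Ω.norm_le_D x hx).trans hr

lemma eq_zero_of_D_le_zero {x : Ω.M} (hx : x ∈ Ω.Ddom) (hr : Ω.D x ≤ 0) : x = 0 :=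
  norm_le_zero_iff.1 (norm_le_of_D_le Ω hx hr)

lemma norm_inn_sub_le (x y : Ω.M) {ξ : Ω.M} (hξ : ξ ∈ Ω.Ddom) (h1 : Ω.D ξ ≤ 1) :
    ‖Ω.inn x ξ - Ω.inn y ξ‖ ≤ (‖x‖ + 1) ^ 2 + (‖y‖ + 1) ^ 2 := by
  have hn := norm_le_of_D_le Ω hξ h1
  refine (norm_sub_le _ _).trans (add_le_add ((norm_inn_le Ω _ _).trans ?_)
    ((norm_inn_le Ω _ _).trans ?_)) <;> gcongr

lemma norm_inn_sub_le_mkD (x y : Ω.M) {ξ : Ω.M} (hξ : ξ ∈ Ω.Ddom) (h1 : Ω.D ξ ≤ 1) :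
    ‖Ω.inn x ξ - Ω.inn y ξ‖ ≤ Ω.mkD x y := by
  refine le_csSup ⟨(‖x‖ + 1) ^ 2 + (‖y‖ + 1) ^ 2, ?_⟩ ⟨ξ, hξ, h1, rfl⟩
  rintro r ⟨ζ, hζ, hζ1, rfl⟩
  exact norm_inn_sub_le Ω x y hζ hζ1

lemma mkD_nonneg (x y : Ω.M) : 0 ≤ Ω.mkD x y := by
  apply Real.sSup_nonneg
  rintro r ⟨ξ, -, -, rfl⟩
  exact norm_nonneg _

lemma mkD_le (x y : Ω.M) : Ω.mkD x y ≤ (‖x‖ + 1) ^ 2 + (‖y‖ + 1) ^ 2 := by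
  refine Real.sSup_le ?_ (by positivity)
  rintro r ⟨ξ, hξ, h1, rfl⟩
  exact norm_inn_sub_le Ω x y hξ h1

/-- Each vector of the unit `D`-ball is within `hausDist + δ` of an anchor. -/
lemma exists_anchor_mkD_lt {J : Type} [Nonempty J] (anc : J → Ω.M)
    (hanc : ∀ j, anc j ∈ Ω.Ddom) (hanc1 : ∀ j, Ω.D (anc j) ≤ 1) {y : Ω.M} (hy : y ∈ Ω.Dball 1)
    {δ : ℝ} (hδ : 0 < δ) :
    ∃ j, Ω.mkD (anc j) y < hausDist Ω.mkD (Set.range anc) (Ω.Dball 1) + δ := by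
  obtain ⟨j₀⟩ := ‹Nonempty J›
  have hbdd : ∀ z : Ω.M, BddBelow {s | ∃ x ∈ Set.range anc, s = Ω.mkD x z} := by
    intro z
    refine ⟨0, ?_⟩
    rintro s ⟨x, -, rfl⟩
    exact mkD_nonneg Ω x z
  have h1 : sInf {s | ∃ x ∈ Set.range anc, s = Ω.mkD x y} ≤
      hausDist Ω.mkD (Set.range anc) (Ω.Dball 1) := by
    refine le_trans (le_csSup (s := {r | ∃ z ∈ Ω.Dball 1,
      r = sInf {s | ∃ x ∈ Set.range anc, s = Ω.mkD x z}})
      ⟨(1 + 1) ^ 2 + (1 + 1) ^ 2, ?_⟩ ⟨y, hy, rfl⟩) (le_max_right _ _)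
    rintro r ⟨z, hz, rfl⟩
    have hz1 := norm_le_of_D_le Ω hz.1 hz.2
    have ha1 := norm_le_of_D_le Ω (hanc j₀) (hanc1 j₀)
    refine (csInf_le (hbdd z) ⟨anc j₀, ⟨j₀, rfl⟩, rfl⟩).trans ((mkD_le Ω _ _).trans ?_)
    gcongr
  obtain ⟨s, ⟨x, ⟨j, rfl⟩, rfl⟩, hs⟩ := exists_lt_of_csInf_lt
    (s := {s | ∃ x ∈ Set.range anc, s = Ω.mkD x y}) ⟨_, anc j₀, ⟨j₀, rfl⟩, rfl⟩
    (h1.trans_lt (lt_add_of_pos_right _ hδ))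
  exact ⟨j, hs⟩

lemma D_smul_real {l : ℝ} (hl : 0 ≤ l) {x : Ω.M} (hx : x ∈ Ω.Ddom) :
    Ω.D ((l : ℂ) • x) = l * Ω.D x := by
  rw [Ω.D_smul _ _ hx, Complex.norm_real, Real.norm_eq_abs, abs_of_nonneg hl]

lemma smul_mem_Dball {l r : ℝ} (hl : 0 ≤ l) {x : Ω.M} (hx : x ∈ Ω.Ddom) (hr : Ω.D x ≤ r) :
    (l : ℂ) • x ∈ Ω.Ddom ∧ Ω.D ((l : ℂ) • x) ≤ l * r :=
  ⟨Ω.Ddom_smul _ _ hx, by rw [D_smul_real Ω hl hx]; gcongr⟩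

/-- The scaled form of `exists_anchor_mkD_lt`: a vector of the `D`-ball of radius `l` is
approximated by `l` times an anchor, when tested against the `D`-ball of radius `l`. -/
lemma exists_anchor_near {J : Type} [Nonempty J] (anc : J → Ω.M)
    (hanc : ∀ j, anc j ∈ Ω.Ddom) (hanc1 : ∀ j, Ω.D (anc j) ≤ 1) {y : Ω.M} (hy : y ∈ Ω.Ddom)
    {l : ℝ} (hyl : Ω.D y ≤ l) {δ : ℝ} (hδ : 0 < δ) :
    ∃ j, ∀ ξ ∈ Ω.Ddom, Ω.D ξ ≤ l → ‖Ω.inn y ξ - Ω.inn ((l : ℂ) • anc j) ξ‖ ≤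
      l ^ 2 * (hausDist Ω.mkD (Set.range anc) (Ω.Dball 1) + δ) := by
  rcases ((Ω.D_nonneg y).trans hyl).eq_or_lt with rfl | hpos
  · obtain ⟨j⟩ := ‹Nonempty J›
    refine ⟨j, fun ξ hξ h0 => ?_⟩
    rw [eq_zero_of_D_le_zero Ω hξ h0]
    simp [inn_zero_right]
  have hinv : ∀ ξ ∈ Ω.Ddom, Ω.D ξ ≤ l →
      ((l⁻¹ : ℝ) : ℂ) • ξ ∈ Ω.Ddom ∧ Ω.D (((l⁻¹ : ℝ) : ℂ) • ξ) ≤ 1 := by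
    intro ξ hξ h
    have h1 := smul_mem_Dball Ω (inv_pos.2 hpos).le hξ h
    rwa [inv_mul_cancel₀ hpos.ne'] at h1
  have hlC : (l : ℂ) ≠ 0 := by exact_mod_cast hpos.ne'
  obtain ⟨j, hj⟩ := exists_anchor_mkD_lt Ω anc hanc hanc1 (hinv y hy hyl) hδ
  refine ⟨j, fun ξ hξ h => ?_⟩
  obtain ⟨hξ1, hξ2⟩ := hinv ξ hξ h
  have h1 := (norm_inn_sub_le_mkD Ω (anc j) (((l⁻¹ : ℝ) : ℂ) • y) hξ1 hξ2).trans hj.le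
  have e : Ω.inn y ξ - Ω.inn ((l : ℂ) • anc j) ξ = (-(l : ℂ) ^ 2) •
      (Ω.inn (anc j) (((l⁻¹ : ℝ) : ℂ) • ξ) -
        Ω.inn (((l⁻¹ : ℝ) : ℂ) • y) (((l⁻¹ : ℝ) : ℂ) • ξ)) := by
    simp only [Ω.inn_smul_leftC, inn_smul_right, Complex.conj_ofReal]
    push_cast
    match_scalars <;> field_simp
  rw [e, norm_smul, norm_neg, norm_pow, Complex.norm_real, Real.norm_eq_abs, abs_of_pos hpos]
  gcongr

lemma reEl_inn_self (x : Ω.M) : reEl (Ω.inn x x) = Ω.inn x x := by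
  rw [reEl, Ω.inn_star, ← two_smul ℂ, smul_smul, inv_mul_cancel₀ two_ne_zero, one_smul]

/-- Doubling the vector gives `L(⟨x,x⟩) = L(⟨2x,2x⟩)/4`, a better bound than `H(l,l)` in
comparison with `H(2l,2l)`. -/
lemma L_inn_self_le (hFGH : AdmissibleTriple F G H) {x : Ω.M} (hx : x ∈ Ω.Ddom) {l : ℝ}
    (hl : Ω.D x ≤ l) :
    Ω.inn x x ∈ Ω.base.dom ∧ Ω.base.L (Ω.inn x x) ≤ H (2 * l) (2 * l) / 4 := by
  have hmem : Ω.inn x x ∈ Ω.base.dom := by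
    have h := (Ω.inn_leibniz x hx x hx).1
    rwa [reEl_inn_self] at h
  refine ⟨hmem, ?_⟩
  obtain ⟨h2, h2l⟩ := smul_mem_Dball Ω zero_le_two hx hl
  have h := (Ω.inn_leibniz _ h2 _ h2).2.2.1
  have e : Ω.inn (((2 : ℝ) : ℂ) • x) (((2 : ℝ) : ℂ) • x) = ((4 : ℝ) : ℂ) • Ω.inn x x := by
    rw [Ω.inn_smul_leftC, inn_smul_right, smul_smul, Complex.conj_ofReal]
    norm_num
  rw [reEl_inn_self, e, Ω.base.L_smul _ _ hmem, abs_of_pos (by norm_num)] at h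
  have hH := hFGH.2.2.2.1 _ _ _ _ (Ω.D_nonneg _) (Ω.D_nonneg _) h2l h2l
  linarith

end Bundle

/-! ### Modular bridges -/

namespace ModularBridge

variable {ΩA ΩB : BundledMQVB F G H} (γ : ModularBridge ΩA ΩB)

lemma norm_piA_le (a : ΩA.A) : ‖γ.piA a‖ ≤ ‖a‖ := by
  let _ : CStarAlgebra ΩA.A := {}
  let _ : CStarAlgebra γ.Dalg := {}
  exact NonUnitalStarAlgHom.norm_apply_le γ.piA a

lemma norm_piB_le (b : ΩB.A) : ‖γ.piB b‖ ≤ ‖b‖ := by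
  let _ : CStarAlgebra ΩB.A := {}
  let _ : CStarAlgebra γ.Dalg := {}
  exact NonUnitalStarAlgHom.norm_apply_le γ.piB b

lemma bn_nonneg (a : ΩA.A) (b : ΩB.A) : 0 ≤ γ.bn a b := norm_nonneg _

lemma bn_le (a : ΩA.A) (b : ΩB.A) : γ.bn a b ≤ ‖a‖ + ‖b‖ := by
  refine (norm_sub_le _ _).trans (add_le_add ?_ ?_)
  · refine (norm_mul_le _ _).trans ?_
    rw [γ.pivot_norm, mul_one]
    exact γ.norm_piA_le a
  · refine (norm_mul_le _ _).trans ?_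
    rw [γ.pivot_norm, one_mul]
    exact γ.norm_piB_le b

lemma deck_le (ω : ΩA.M) (η : ΩB.M) (k : γ.J) :
    max (γ.bn (ΩA.inn ω (γ.anchors k)) (ΩB.inn η (γ.coanchors k)))
        (γ.bn (ΩA.inn (γ.anchors k) ω) (ΩB.inn (γ.coanchors k) η)) ≤
      (‖ω‖ + 1) ^ 2 + (‖η‖ + 1) ^ 2 := by
  have h1 := norm_le_of_D_le ΩA (γ.anchors_mem k) (γ.anchors_le k)
  have h2 := norm_le_of_D_le ΩB (γ.coanchors_mem k) (γ.coanchors_le k)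
  have h3 : (‖ω‖ + ‖γ.anchors k‖) ^ 2 ≤ (‖ω‖ + 1) ^ 2 := by gcongr
  have h4 : (‖η‖ + ‖γ.coanchors k‖) ^ 2 ≤ (‖η‖ + 1) ^ 2 := by gcongr
  refine max_le ((γ.bn_le _ _).trans (add_le_add ?_ ?_))
    ((γ.bn_le _ _).trans (add_le_add ?_ ?_))
  · exact (norm_inn_le ΩA _ _).trans h3
  · exact (norm_inn_le ΩB _ _).trans h4
  · exact (norm_inn_le ΩA _ _).trans (by rwa [add_comm])
  · exact (norm_inn_le ΩB _ _).trans (by rwa [add_comm ‖γ.coanchors k‖])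

lemma bn_le_dn (ω : ΩA.M) (η : ΩB.M) (k : γ.J) :
    γ.bn (ΩA.inn ω (γ.anchors k)) (ΩB.inn η (γ.coanchors k)) ≤ γ.dn ω η ∧
    γ.bn (ΩA.inn (γ.anchors k) ω) (ΩB.inn (γ.coanchors k) η) ≤ γ.dn ω η := by
  apply max_le_iff.1
  refine le_ciSup (f := fun k : γ.J =>
    max (γ.bn (ΩA.inn ω (γ.anchors k)) (ΩB.inn η (γ.coanchors k)))
        (γ.bn (ΩA.inn (γ.anchors k) ω) (ΩB.inn (γ.coanchors k) η)))
    ⟨(‖ω‖ + 1) ^ 2 + (‖η‖ + 1) ^ 2, ?_⟩ k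
  rintro _ ⟨k, rfl⟩
  exact γ.deck_le ω η k

lemma dn_nonneg (ω : ΩA.M) (η : ΩB.M) : 0 ≤ γ.dn ω η :=
  Real.iSup_nonneg fun _ => le_max_of_le_left (γ.bn_nonneg _ _)

lemma modularReach_nonneg : 0 ≤ γ.modularReach :=
  Real.iSup_nonneg fun _ => γ.dn_nonneg _ _

lemma dn_le_modularReach (j : γ.J) :
    γ.dn (γ.anchors j) (γ.coanchors j) ≤ γ.modularReach := by
  refine le_ciSup (f := fun j : γ.J => γ.dn (γ.anchors j) (γ.coanchors j))
    ⟨(1 + 1) ^ 2 + (1 + 1) ^ 2, ?_⟩ j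
  rintro _ ⟨i, rfl⟩
  refine ciSup_le fun k => (γ.deck_le _ _ k).trans ?_
  have h1 := norm_le_of_D_le ΩA (γ.anchors_mem i) (γ.anchors_le i)
  have h2 := norm_le_of_D_le ΩB (γ.coanchors_mem i) (γ.coanchors_le i)
  gcongr

lemma basicReach_nonneg : 0 ≤ γ.basicReach := by
  refine le_max_of_le_left (Real.sSup_nonneg ?_)
  rintro r ⟨a, -, -, rfl⟩
  refine Real.sInf_nonneg ?_
  rintro s ⟨b, -, -, rfl⟩
  exact γ.bn_nonneg a b

lemma length_nonneg : 0 ≤ γ.length :=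
  γ.basicReach_nonneg.trans ((le_max_left _ _).trans (le_max_left _ _))

/-- A state in the 1-level set absorbs the pivot on both sides. -/
lemma level_mul {φ : CState γ.Dalg} (hφ : φ ∈ γ.levelStates) (d : γ.Dalg) :
    φ.toFun (d * γ.pivot) = φ.toFun d ∧ φ.toFun (γ.pivot * d) = φ.toFun d := by
  have h1 := (φ.null_mul hφ.1 (star d)).2
  have h2 := (φ.null_mul (u := star (1 - γ.pivot)) (by rw [star_star]; exact hφ.2) d).1
  rw [star_star] at h1 h2
  rw [mul_sub, map_sub, mul_one, sub_eq_zero] at h1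
  rw [sub_mul, map_sub, one_mul, sub_eq_zero] at h2
  exact ⟨h1.symm, h2.symm⟩

lemma level_sub_le_bn {φ : CState γ.Dalg} (hφ : φ ∈ γ.levelStates) (a : ΩA.A) (b : ΩB.A) :
    ‖φ.toFun (γ.piA a) - φ.toFun (γ.piB b)‖ ≤ γ.bn a b := by
  rw [← (γ.level_mul hφ (γ.piA a)).1, ← (γ.level_mul hφ (γ.piB b)).2, ← map_sub]
  exact φ.norm_le _

end ModularBridge

/-! ### Norm estimates through level states -/

namespace ModularBridge

variable {ΩA ΩB : BundledMQVB F G H} (γ : ModularBridge ΩA ΩB)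

lemma level_sub_le_A {φ : CState γ.Dalg} (a a' : ΩA.A) :
    ‖φ.toFun (γ.piA a) - φ.toFun (γ.piA a')‖ ≤ ‖a - a'‖ := by
  rw [← map_sub, ← map_sub]
  exact (φ.norm_le _).trans (γ.norm_piA_le _)

lemma level_sub_le_B {φ : CState γ.Dalg} (b b' : ΩB.A) :
    ‖φ.toFun (γ.piB b) - φ.toFun (γ.piB b')‖ ≤ ‖b - b'‖ := by
  rw [← map_sub, ← map_sub]
  exact (φ.norm_le _).trans (γ.norm_piB_le _)

lemma norm_inn_sub_swap (Ω : BundledMQVB F G H) (x y ξ : Ω.M) :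
    ‖Ω.inn ξ x - Ω.inn ξ y‖ = ‖Ω.inn x ξ - Ω.inn y ξ‖ := by
  rw [← norm_star (Ω.inn x ξ - Ω.inn y ξ), star_sub, Ω.inn_star, Ω.inn_star]

/-- Comparison of a vector of `M` and one of `N` against a scaled pair of anchors, in either
slot of the inner products, under a level state. -/
lemma level_anchor_sub_le {φ : CState γ.Dalg} (hφ : φ ∈ γ.levelStates) {l : ℝ} (hl : 0 ≤ l)
    (x : ΩA.M) (y : ΩB.M) (k : γ.J) :
    ‖φ.toFun (γ.piA (ΩA.inn x ((l : ℂ) • γ.anchors k))) -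
      φ.toFun (γ.piB (ΩB.inn y ((l : ℂ) • γ.coanchors k)))‖ ≤ l * γ.dn x y ∧
    ‖φ.toFun (γ.piA (ΩA.inn ((l : ℂ) • γ.anchors k) x)) -
      φ.toFun (γ.piB (ΩB.inn ((l : ℂ) • γ.coanchors k) y))‖ ≤ l * γ.dn x y := by
  obtain ⟨h1, h2⟩ := γ.bn_le_dn x y k
  constructor
  · rw [inn_smul_right, inn_smul_right, Complex.conj_ofReal, map_smul, map_smul, map_smul,
      map_smul, ← smul_sub, norm_smul, Complex.norm_real, Real.norm_eq_abs, abs_of_nonneg hl]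
    exact mul_le_mul_of_nonneg_left ((γ.level_sub_le_bn hφ _ _).trans h1) hl
  · rw [ΩA.inn_smul_leftC, ΩB.inn_smul_leftC, map_smul, map_smul, map_smul,
      map_smul, ← smul_sub, norm_smul, Complex.norm_real, Real.norm_eq_abs, abs_of_nonneg hl]
    exact mul_le_mul_of_nonneg_left ((γ.level_sub_le_bn hφ _ _).trans h2) hl

/-- A level state nearly identifies `⟨ω,ω⟩` with `⟨η,η⟩` when `η` is in the target set of `ω`:
the two numbers are joined by seven comparisons in which `ω` and `η` are replaced by scaled
anchors and co-anchors. -/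
lemma level_inn_sub_le {φ : CState γ.Dalg} (hφ : φ ∈ γ.levelStates) {l : ℝ}
    {ω : ΩA.M} (hω : ω ∈ ΩA.Ddom) (hωl : ΩA.D ω ≤ l) {η : ΩB.M} (hη : η ∈ γ.mtarget ω l) :
    ‖φ.toFun (γ.piA (ΩA.inn ω ω)) - φ.toFun (γ.piB (ΩB.inn η η))‖ ≤ 6 * l ^ 2 * γ.length := by
  obtain ⟨hηd, hηl, hdn⟩ := hη
  have hl0 : 0 ≤ l := (ΩA.D_nonneg ω).trans hωl
  refine le_of_forall_pos_le_add fun ε hε => ?_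
  have hpos : 0 < 4 * l ^ 2 + 1 := by positivity
  set δ := ε / (4 * l ^ 2 + 1) with hδ
  have hδ0 : 0 < δ := div_pos hε hpos
  have hδε : 4 * l ^ 2 * δ ≤ ε := by
    have : (4 * l ^ 2 + 1) * δ = ε := by rw [hδ]; field_simp
    nlinarith
  obtain ⟨j, hj⟩ := exists_anchor_near ΩA γ.anchors γ.anchors_mem γ.anchors_le hω hωl hδ0
  obtain ⟨i, hi⟩ :=
    exists_anchor_near ΩB γ.coanchors γ.coanchors_mem γ.coanchors_le hηd hηl hδ0
  have hK1 : l ^ 2 * (hausDist ΩA.mkD (Set.range γ.anchors) (ΩA.Dball 1) + δ) ≤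
      l ^ 2 * (γ.imprint + δ) := by
    gcongr
    exact le_max_left _ _
  have hK2 : l ^ 2 * (hausDist ΩB.mkD (Set.range γ.coanchors) (ΩB.Dball 1) + δ) ≤
      l ^ 2 * (γ.imprint + δ) := by
    gcongr
    exact le_max_right _ _
  obtain ⟨hai, hai1⟩ := smul_mem_Dball ΩA hl0 (γ.anchors_mem i) (γ.anchors_le i)
  obtain ⟨hcj, hcj1⟩ := smul_mem_Dball ΩB hl0 (γ.coanchors_mem j) (γ.coanchors_le j)
  rw [mul_one] at hai1 hcj1
  have s1 := (γ.level_sub_le_A (φ := φ) (ΩA.inn ω ω)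
    (ΩA.inn ((l : ℂ) • γ.anchors j) ω)).trans ((hj ω hω hωl).trans hK1)
  have s2 := (γ.level_anchor_sub_le hφ hl0 ω η j).2
  have s3 := (γ.level_sub_le_B (φ := φ) (ΩB.inn ((l : ℂ) • γ.coanchors j) η)
    (ΩB.inn ((l : ℂ) • γ.coanchors j) ((l : ℂ) • γ.coanchors i))).trans
    ((norm_inn_sub_swap ΩB _ _ _).le.trans ((hi _ hcj hcj1).trans hK2))
  have s4 : ‖φ.toFun (γ.piA (ΩA.inn ((l : ℂ) • γ.anchors j) ((l : ℂ) • γ.anchors i))) -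
      φ.toFun (γ.piB (ΩB.inn ((l : ℂ) • γ.coanchors j) ((l : ℂ) • γ.coanchors i)))‖ ≤
      l * (l * γ.modularReach) := by
    rw [ΩA.inn_smul_leftC, ΩB.inn_smul_leftC, map_smul, map_smul, map_smul,
      map_smul, ← smul_sub, norm_smul, Complex.norm_real, Real.norm_eq_abs, abs_of_nonneg hl0]
    refine mul_le_mul_of_nonneg_left
      ((γ.level_anchor_sub_le hφ hl0 (γ.anchors j) (γ.coanchors j) i).1.trans ?_) hl0
    exact mul_le_mul_of_nonneg_left (γ.dn_le_modularReach j) hl0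
  have s5 := (γ.level_sub_le_A (φ := φ) (ΩA.inn ω ((l : ℂ) • γ.anchors i))
    (ΩA.inn ((l : ℂ) • γ.anchors j) ((l : ℂ) • γ.anchors i))).trans ((hj _ hai hai1).trans hK1)
  have s6 := (γ.level_anchor_sub_le hφ hl0 ω η i).1
  have s7 := (γ.level_sub_le_B (φ := φ) (ΩB.inn η η)
    (ΩB.inn η ((l : ℂ) • γ.coanchors i))).trans
    ((norm_inn_sub_swap ΩB _ _ _).le.trans ((hi η hηd hηl).trans hK2))
  have hdn' : l * γ.dn ω η ≤ l * (l * γ.reach) := mul_le_mul_of_nonneg_left hdn hl0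
  have hρ : γ.modularReach + γ.imprint ≤ γ.length := (le_max_right _ _).trans (le_max_left _ _)
  have hρ' : γ.reach ≤ γ.length := le_max_left _ _
  have hm := γ.modularReach_nonneg
  generalize φ.toFun (γ.piA (ΩA.inn ω ω)) = z₁ at *
  generalize φ.toFun (γ.piA (ΩA.inn ((l : ℂ) • γ.anchors j) ω)) = z₂ at *
  generalize φ.toFun (γ.piB (ΩB.inn ((l : ℂ) • γ.coanchors j) η)) = z₃ at *
  generalize φ.toFun (γ.piB (ΩB.inn ((l : ℂ) • γ.coanchors j) ((l : ℂ) • γ.coanchors i))) = z₄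
    at *
  generalize φ.toFun (γ.piA (ΩA.inn ((l : ℂ) • γ.anchors j) ((l : ℂ) • γ.anchors i))) = z₅ at *
  generalize φ.toFun (γ.piA (ΩA.inn ω ((l : ℂ) • γ.anchors i))) = z₆ at *
  generalize φ.toFun (γ.piB (ΩB.inn η ((l : ℂ) • γ.coanchors i))) = z₇ at *
  generalize φ.toFun (γ.piB (ΩB.inn η η)) = z₈ at *
  have e : z₁ - z₈ = (z₁ - z₂) + (z₂ - z₃) + (z₃ - z₄) - (z₅ - z₄) - (z₆ - z₅) + (z₆ - z₇)
      - (z₈ - z₇) := by ring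
  have t : ‖z₁ - z₈‖ ≤ ‖z₁ - z₂‖ + ‖z₂ - z₃‖ + ‖z₃ - z₄‖ + ‖z₅ - z₄‖ + ‖z₆ - z₅‖ + ‖z₆ - z₇‖
      + ‖z₈ - z₇‖ := by
    rw [e]
    refine (norm_sub_le _ _).trans (add_le_add_left ?_ _)
    refine (norm_add_le _ _).trans (add_le_add_left ?_ _)
    refine (norm_sub_le _ _).trans (add_le_add_left ?_ _)
    refine (norm_sub_le _ _).trans (add_le_add_left ?_ _)
    exact norm_add₃_le
  have hl2 : 0 ≤ l ^ 2 := sq_nonneg l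
  have q1 : l ^ 2 * (4 * γ.imprint + γ.modularReach) ≤ l ^ 2 * (4 * γ.length) := by
    gcongr
    linarith
  have q2 : l ^ 2 * γ.reach ≤ l ^ 2 * γ.length := by gcongr
  linarith

/-- A self-adjoint element of `B` is controlled by its values on level states: its norm is
attained by a state of `B`, which is at Monge–Kantorovich distance at most the height from a
level state. -/
lemma norm_le_of_level {c : ΩB.A} (hc : c ∈ ΩB.base.dom) {R : ℝ}
    (hR : ∀ φ ∈ γ.levelStates, ‖φ.toFun (γ.piB c)‖ ≤ R) :
    ‖c‖ ≤ R + ΩB.base.L c * γ.length := by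
  -- The pivot has norm one, so the bridge algebra and hence `B` are nonzero.
  have hD : Nontrivial γ.Dalg := by
    refine nontrivial_of_ne γ.pivot 0 fun h => ?_
    have h1 := γ.pivot_norm
    rw [h, norm_zero] at h1
    exact zero_ne_one h1
  have hB : Nontrivial ΩB.A := by
    refine nontrivial_of_ne 1 0 fun h => ?_
    have h1 : γ.piB 1 = γ.piB 0 := by rw [h]
    rw [map_one, map_zero] at h1
    exact one_ne_zero h1
  obtain ⟨ψ, hψ⟩ := exists_state_norm_eq (ΩB.base.dom_selfAdjoint c hc)
  set T : Set (CState ΩB.A) :=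
    {ψ | ∃ φ ∈ γ.levelStates, ∀ b : ΩB.A, ψ.toFun b = φ.toFun (γ.piB b)} with hTdef
  have hT : T.Nonempty := by
    obtain ⟨φ, hφ⟩ := γ.levelSet_nonempty
    refine ⟨⟨φ.toFun ∘ₗ (γ.piB : ΩB.A →ₗ[ℂ] γ.Dalg), ?_, fun b => ?_⟩, φ, hφ, fun b => rfl⟩
    · change φ.toFun (γ.piB 1) = 1
      rw [map_one, φ.map_one]
    · change 0 ≤ φ.toFun (γ.piB (star b * b))
      rw [map_mul, map_star]
      exact φ.positive _
  have hL := ΩB.base.L_nonneg c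
  refine le_of_forall_pos_le_add fun ε hε => ?_
  have hpos : 0 < ΩB.base.L c + 1 := by positivity
  obtain ⟨χ, ⟨φ, hφ, hχφ⟩, hχ⟩ := exists_mkDist_lt ΩB.base hT ψ (div_pos hε hpos)
  have h1 := norm_sub_le_mul_mkDist ΩB.base ψ χ hc
  have h2 : hausDist (mkDist ΩB.base.dom ΩB.base.L) Set.univ T ≤ γ.length :=
    (le_max_right _ _).trans (le_max_right _ _)
  have h3 : ‖χ.toFun c‖ ≤ R := by
    rw [hχφ]
    exact hR φ hφ
  have h4 : ‖ψ.toFun c‖ ≤ ‖χ.toFun c‖ + ‖ψ.toFun c - χ.toFun c‖ := by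
    have := norm_add_le (χ.toFun c) (ψ.toFun c - χ.toFun c)
    rwa [add_sub_cancel] at this
  have h5 : ΩB.base.L c * mkDist ΩB.base.dom ΩB.base.L ψ χ ≤
      ΩB.base.L c * (γ.length + ε / (ΩB.base.L c + 1)) := by
    gcongr
    linarith
  have h6 : (ΩB.base.L c + 1) * (ε / (ΩB.base.L c + 1)) = ε := by field_simp
  have h7 : 0 < ε / (ΩB.base.L c + 1) := div_pos hε hpos
  linarith

end ModularBridge

/-- target sets of modular bridges are almost compatible with the inner
products: if `η ∈ t_γ(ω|l)` and `b ∈ t_γ(⟨ω,ω⟩|H(l,l))`, then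
`‖b - ⟨η,η⟩‖ ≤ (8l√2 + H(2l,2l) + 2H(l,l) + 2√2 H(2l,1)) λ(γ)`. -/
theorem statement10 {F : ℝ → ℝ → ℝ → ℝ → ℝ} {G : ℝ → ℝ → ℝ → ℝ} {H : ℝ → ℝ → ℝ}
    (hFGH : AdmissibleTriple F G H)
    {ΩA ΩB : BundledMQVB F G H} (γ : ModularBridge ΩA ΩB)
    (ω : ΩA.M) (hω : ω ∈ ΩA.Ddom) (l : ℝ) (hl : ΩA.D ω ≤ l)
    (η : ΩB.M) (hη : η ∈ γ.mtarget ω l)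
    (b : ΩB.A) (hb : b ∈ γ.atarget (ΩA.inn ω ω) (H l l)) :
    ‖b - ΩB.inn η η‖ ≤
      (8 * l * Real.sqrt 2 + H (2 * l) (2 * l) + 2 * H l l +
        2 * Real.sqrt 2 * H (2 * l) 1) * γ.length := by
  obtain ⟨hηd, hηl, -⟩ := id hη
  obtain ⟨hbd, hbL, hbn⟩ := hb
  have hl0 : 0 ≤ l := (ΩA.D_nonneg ω).trans hl
  have hlen := γ.length_nonneg
  have hHlow := hFGH.2.2.2.2
  have hHll := hHlow l l hl0 hl0
  have hH2 := hHlow (2 * l) (2 * l) (by positivity) (by positivity)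
  have hH1 := hHlow (2 * l) 1 (by positivity) zero_le_one
  have hHll0 : 0 ≤ H l l := le_trans (by positivity) hHll
  obtain ⟨hnd, hnL⟩ := L_inn_self_le ΩB hFGH hηd hηl
  have hc : b - ΩB.inn η η = b + ((-1 : ℝ) : ℂ) • ΩB.inn η η := by
    simp [sub_eq_add_neg]
  have hneg := ΩB.base.dom_smul (-1) _ hnd
  have hcd : b - ΩB.inn η η ∈ ΩB.base.dom := by
    rw [hc]
    exact ΩB.base.dom_add _ hbd _ hneg
  have hcL : ΩB.base.L (b - ΩB.inn η η) ≤ H l l + H (2 * l) (2 * l) / 4 := by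
    rw [hc]
    refine (ΩB.base.L_add _ hbd _ hneg).trans (add_le_add hbL ?_)
    rw [ΩB.base.L_smul _ _ hnd, abs_neg, abs_one, one_mul]
    exact hnL
  have hlevel : ∀ φ ∈ γ.levelStates, ‖φ.toFun (γ.piB (b - ΩB.inn η η))‖ ≤
      (H l l + 6 * l ^ 2) * γ.length := by
    intro φ hφ
    have h1 := (γ.level_sub_le_bn hφ (ΩA.inn ω ω) b).trans hbn
    have h2 := γ.level_inn_sub_le hφ hω hl hη
    have h3 : H l l * γ.basicReach ≤ H l l * γ.length :=
      mul_le_mul_of_nonneg_left ((le_max_left _ _).trans (le_max_left _ _)) hHll0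
    have e : φ.toFun (γ.piB (b - ΩB.inn η η)) =
        (φ.toFun (γ.piA (ΩA.inn ω ω)) - φ.toFun (γ.piB (ΩB.inn η η))) -
        (φ.toFun (γ.piA (ΩA.inn ω ω)) - φ.toFun (γ.piB b)) := by
      rw [map_sub, map_sub]
      ring
    rw [e]
    refine (norm_sub_le _ _).trans ?_
    linarith
  have hmain := γ.norm_le_of_level hcd hlevel
  have hmul := mul_le_mul_of_nonneg_right hcL hlen
  have hs : 0 ≤ 8 * l * Real.sqrt 2 := by positivity
  have hs' : 0 ≤ 2 * Real.sqrt 2 * H (2 * l) 1 :=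
    mul_nonneg (by positivity) (le_trans (by positivity) hH1)
  calc ‖b - ΩB.inn η η‖ ≤ (H l l + 6 * l ^ 2) * γ.length +
        (H l l + H (2 * l) (2 * l) / 4) * γ.length := hmain.trans (by gcongr)
    _ = (2 * H l l + 6 * l ^ 2 + H (2 * l) (2 * l) / 4) * γ.length := by ring
    _ ≤ _ := by
      refine mul_le_mul_of_nonneg_right ?_ hlen
      -- `6l² ≤ (3/4) H(2l,2l)` because `H(2l,2l) ≥ 8l²`.
      linarith
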